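/- For every n ≥ 2 and every integer i ≥ 0 with n + 2i − 1 ≥ 3, one has ρ(P_n, {2^i·δ_{x_1}, 2^i·δ_{x_n}}) = π(C_{n+2i−1}); that is, the target-selectable pebbling number of the set of two target distributions consisting of 2^i pebbles on one endpoint of the path P_n equals the pebbling number of the cycle on n + 2i − 1 vertices. -/

import Mathlib

open scoped BigOperators

/-- A single pebbling move on a simple graph: remove two pebbles from `u`
and add one pebble on an adjacent vertex `v`. -/
def PebMove {V : Type*} [DecidableEq V] (G : SimpleGraph V) (D D' : V → ℕ) : Prop :=
  ∃ u v, G.Adj u v ∧ 2 ≤ D u ∧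
    D' = fun w => if w = u then D u - 2 else if w = v then D v + 1 else D w

/-- `D'` is reachable from `D`: some sequence of pebbling moves starting at `D`
produces a distribution containing `D'`. -/
def Reaches {V : Type*} [DecidableEq V] (G : SimpleGraph V) (D D' : V → ℕ) : Prop :=
  ∃ D'', Relation.ReflTransGen (PebMove G) D D'' ∧ ∀ v, D' v ≤ D'' v

/-- Total number of pebbles of a distribution. -/
def pebTotal {V : Type*} [Fintype V] (D : V → ℕ) : ℕ := ∑ v, D v

/-- The pebbling number of a set `S` of target distributions on `G`:
the least `N` (possibly `∞`) such that every member of `S` is reachable from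
every distribution with at least `N` pebbles in total. -/
noncomputable def pebSet {V : Type*} [Fintype V] [DecidableEq V] (G : SimpleGraph V)
    (S : Set (V → ℕ)) : ℕ∞ :=
  sInf {N : ℕ∞ | ∀ D₀ : V → ℕ, N ≤ (pebTotal D₀ : ℕ∞) → ∀ D ∈ S, Reaches G D₀ D}

/-- The pebbling number of a single target distribution. -/
noncomputable def peb {V : Type*} [Fintype V] [DecidableEq V] (G : SimpleGraph V)
    (D : V → ℕ) : ℕ∞ :=
  pebSet G {D}

/-- The distribution with `t` pebbles on `v` and none elsewhere. -/
def unitDist {V : Type*} [DecidableEq V] (t : ℕ) (v : V) : V → ℕ :=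
  fun w => if w = v then t else 0


/-- The target-selectable pebbling number of a set `S` of target distributions:
the least `N` (possibly `∞`) such that from every distribution with at least
`N` pebbles in total, at least one member of `S` is reachable. -/
noncomputable def tsPeb {V : Type*} [Fintype V] [DecidableEq V] (G : SimpleGraph V)
    (S : Set (V → ℕ)) : ℕ∞ :=
  sInf {N : ℕ∞ | ∀ D₀ : V → ℕ, N ≤ (pebTotal D₀ : ℕ∞) → ∃ D ∈ S, Reaches G D₀ D}

/-!
On a path, only moves towards an end help that end, so whether it can collect `N` pebbles is decided
by a single weight, in which a pebble at distance `d` counts `2 ^ (-d)`. A distribution from which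
neither end of `P_{n+1}` collects `N` pebbles is thus small in two weights at once, and rounding the
two weights of each pebble bounds its size sharply. The resulting number depends only on
`N * 2 ^ (n - n / 2)` and the parity of `n`, so `2 ^ i` pebbles at an end of `P_n` are as hard to
collect as a single one at an end of `P_{n+2i}`. Finally, `P_{n+2i}` is the cycle `C_{n+2i-1}` cut
open at the target vertex, which becomes both of the ends.
-/

section Moves

variable {V : Type*} [DecidableEq V] {G : SimpleGraph V} {D D' D'' : V → ℕ}

lemma unitDist_eq_single (t : ℕ) (v : V) : unitDist t v = Pi.single v t := by
  ext w
  simp only [unitDist, Pi.single_apply]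

lemma unitDist_add (s t : ℕ) (v : V) : unitDist (s + t) v = unitDist s v + unitDist t v := by
  simp only [unitDist_eq_single, Pi.single_add]

lemma unitDist_le_iff {t : ℕ} {v : V} : unitDist t v ≤ D ↔ t ≤ D v := by
  refine ⟨fun h => by simpa [unitDist] using h v, fun h w => ?_⟩
  by_cases hw : w = v <;> simp [unitDist, hw, h]

lemma sum_unitDist [Fintype V] (D : V → ℕ) : ∑ v, unitDist (D v) v = D := by
  simp only [unitDist_eq_single, Finset.univ_sum_single]

lemma sum_unitDist_mul [Fintype V] (t : ℕ) (v : V) (w : V → ℕ) :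
    ∑ x, unitDist t v x * w x = t * w v := by
  simp [unitDist]

lemma pebMove_iff : PebMove G D D' ↔
    ∃ u v E, G.Adj u v ∧ D = E + unitDist 2 u ∧ D' = E + unitDist 1 v := by
  constructor
  · rintro ⟨u, v, huv, hu, rfl⟩
    refine ⟨u, v, D - unitDist 2 u, huv, (tsub_add_cancel_of_le (unitDist_le_iff.2 hu)).symm, ?_⟩
    ext w
    have := huv.ne
    simp only [Pi.add_apply, Pi.sub_apply, unitDist]
    grind
  · rintro ⟨u, v, E, huv, rfl, rfl⟩
    refine ⟨u, v, huv, by simp [unitDist], ?_⟩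
    ext w
    have := huv.ne
    simp only [Pi.add_apply, unitDist]
    grind

lemma PebMove.add_right (h : PebMove G D D') (E : V → ℕ) : PebMove G (D + E) (D' + E) := by
  obtain ⟨u, v, F, huv, rfl, rfl⟩ := pebMove_iff.1 h
  exact pebMove_iff.2 ⟨u, v, F + E, huv, add_right_comm .., add_right_comm ..⟩

lemma Reaches.of_le (h : D' ≤ D) : Reaches G D D' := ⟨D, .refl, h⟩

lemma PebMove.reaches (h : PebMove G D D') : Reaches G D D' := ⟨D', .single h, fun _ => le_rfl⟩

lemma Reaches.add_right (h : Reaches G D D') (E : V → ℕ) : Reaches G (D + E) (D' + E) := by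
  obtain ⟨F, hmoves, hle⟩ := h
  exact ⟨F + E, hmoves.lift (· + E) fun _ _ hmove => hmove.add_right E,
    fun v => Nat.add_le_add_right (hle v) _⟩

lemma Reaches.trans (h : Reaches G D D') (h' : Reaches G D' D'') : Reaches G D D'' := by
  obtain ⟨F, hmoves, hle⟩ := h
  obtain ⟨F', hmoves', hle'⟩ := h'.add_right (F - D')
  rw [add_tsub_cancel_of_le (show D' ≤ F from hle)] at hmoves'
  exact ⟨F', hmoves.trans hmoves', fun v => (Nat.le_add_right _ _).trans (hle' v)⟩

lemma reaches_unitDist_of_adj {u v : V} (huv : G.Adj u v) (t : ℕ) :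
    Reaches G (unitDist (2 * t) u) (unitDist t v) := by
  induction t with
  | zero => exact .of_le (unitDist_le_iff.2 (Nat.zero_le _))
  | succ t ih =>
    have hmove : PebMove G (unitDist (2 * t) u + unitDist 2 u)
        (unitDist (2 * t) u + unitDist 1 v) := pebMove_iff.2 ⟨u, v, _, huv, rfl, rfl⟩
    rw [mul_add_one, unitDist_add, unitDist_add]
    exact hmove.reaches.trans (ih.add_right _)

lemma Reaches.sum_mul_le [Fintype V] {w : V → ℕ} (hw : ∀ u v, G.Adj u v → w v ≤ 2 * w u)
    (h : Reaches G D D') : ∑ v, D' v * w v ≤ ∑ v, D v * w v := by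
  obtain ⟨F, hmoves, hle⟩ := h
  refine (Finset.sum_le_sum fun v _ => Nat.mul_le_mul_right (w v) (hle v)).trans ?_
  clear hle
  induction hmoves with
  | refl => exact le_rfl
  | tail _ hmove ih =>
    obtain ⟨u, v, E, huv, rfl, rfl⟩ := pebMove_iff.1 hmove
    refine le_trans ?_ ih
    simp only [Pi.add_apply, add_mul, Finset.sum_add_distrib, sum_unitDist_mul, one_mul]
    exact Nat.add_le_add_left (hw u v huv) _

/-- To put a first pebble on `v`, no move may touch `v` before two pebbles sit on a neighbour. -/
lemma Reaches.exists_adj_reaches_deleteIncidenceSet {v : V} (h : Reaches G D (unitDist 1 v))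
    (hD : D v = 0) :
    ∃ u, G.Adj u v ∧ Reaches (G.deleteIncidenceSet v) D (unitDist 2 u) := by
  obtain ⟨F, hmoves, hle⟩ := h
  have hF : 1 ≤ F v := unitDist_le_iff.1 hle
  clear hle
  induction hmoves using Relation.ReflTransGen.head_induction_on with
  | refl => omega
  | head hmove _ ih =>
    obtain ⟨u, w, E, huw, rfl, rfl⟩ := pebMove_iff.1 hmove
    obtain ⟨hEv, huv⟩ : E v = 0 ∧ v ≠ u := by simpa [unitDist] using hD
    by_cases hwv : w = v
    · exact ⟨u, hwv ▸ huw, .of_le le_add_self⟩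
    · obtain ⟨x, hxv, hx⟩ := ih (by simp [unitDist, hEv, Ne.symm hwv])
      have hadj := SimpleGraph.deleteIncidenceSet_adj.2 ⟨huw, huv.symm, hwv⟩
      exact ⟨x, hxv, (pebMove_iff.2 ⟨u, w, E, hadj, rfl, rfl⟩).reaches.trans hx⟩

lemma tsPeb_eq_natCast [Fintype V] {S : Set (V → ℕ)} {k : ℕ}
    (hk : ∀ D, k ≤ pebTotal D → ∃ T ∈ S, Reaches G D T)
    (hlt : ∀ t < k, ∃ D, pebTotal D = t ∧ ∀ T ∈ S, ¬ Reaches G D T) : tsPeb G S = k := by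
  refine le_antisymm (sInf_le fun D hD => hk D (by exact_mod_cast hD)) (le_sInf fun N hN => ?_)
  by_contra! hNk
  lift N to ℕ using hNk.ne_top
  obtain ⟨D, rfl, hD⟩ := hlt N (by exact_mod_cast hNk)
  obtain ⟨T, hT, hDT⟩ := hN D le_rfl
  exact hD T hT hDT

end Moves

section Pushforward

variable {V W : Type*} [Fintype V] [DecidableEq W]

/-- The image of a distribution under a map of vertices: every pebble on `v` is placed on `f v`.
Along a graph homomorphism it carries pebbling moves to pebbling moves. -/
def pushforwardDist (f : V → W) (D : V → ℕ) : W → ℕ := ∑ v, unitDist (D v) (f v)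

lemma pushforwardDist_add (f : V → W) (D E : V → ℕ) :
    pushforwardDist f (D + E) = pushforwardDist f D + pushforwardDist f E := by
  simp only [pushforwardDist, Pi.add_apply, unitDist_add, Finset.sum_add_distrib]

lemma pushforwardDist_mono (f : V → W) : Monotone (pushforwardDist f) := fun D E h => by
  rw [← add_tsub_cancel_of_le h, pushforwardDist_add]
  exact le_self_add

lemma pushforwardDist_comp_equiv (e : V ≃ W) (D : W → ℕ) : pushforwardDist e (D ∘ e) = D := by
  ext w
  obtain ⟨v, rfl⟩ := e.surjective w
  rw [pushforwardDist, Finset.sum_apply, Finset.sum_eq_single v] <;>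
    simp +contextual [unitDist, eq_comm]

variable [DecidableEq V] {H : SimpleGraph V} {G : SimpleGraph W}

lemma pushforwardDist_unitDist (f : V → W) (t : ℕ) (v : V) :
    pushforwardDist f (unitDist t v) = unitDist t (f v) := by
  rw [pushforwardDist, Finset.sum_eq_single v] <;> simp +contextual [unitDist, funext_iff]

lemma PebMove.pushforward (f : H →g G) {D D' : V → ℕ} (h : PebMove H D D') :
    PebMove G (pushforwardDist f D) (pushforwardDist f D') := by
  obtain ⟨u, v, E, huv, rfl, rfl⟩ := pebMove_iff.1 h
  refine pebMove_iff.2 ⟨f u, f v, pushforwardDist f E, f.map_adj huv, ?_, ?_⟩ <;>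
    rw [pushforwardDist_add, pushforwardDist_unitDist]

lemma Reaches.pushforward (f : H →g G) {D D' : V → ℕ} (h : Reaches H D D') :
    Reaches G (pushforwardDist f D) (pushforwardDist f D') := by
  obtain ⟨F, hmoves, hle⟩ := h
  exact ⟨_, hmoves.lift _ fun _ _ hmove => hmove.pushforward f, pushforwardDist_mono f hle⟩

end Pushforward

section PathCriterion

open SimpleGraph

/-- The weight of a distribution on a path with respect to its last vertex, scaled to be an
integer: a pebble at distance `d` from the last of `n + 1` vertices counts `2 ^ (n - d)`. The weight
with respect to the first vertex is `lastWeight (D ∘ Fin.rev)`. -/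
def lastWeight {n : ℕ} (D : Fin n → ℕ) : ℕ := ∑ x, D x * 2 ^ (x : ℕ)

variable {n : ℕ}

lemma pushforwardDist_castSucc_add_unitDist_last (D : Fin (n + 1) → ℕ) :
    pushforwardDist Fin.castSucc (D ∘ Fin.castSucc) + unitDist (D (Fin.last n)) (Fin.last n)
      = D := by
  conv_rhs => rw [← sum_unitDist D, Fin.sum_univ_castSucc]
  rfl

/-- The inclusion of a path as the initial segment of the next longer path. -/
def pathGraphCastSucc (n : ℕ) : pathGraph n →g pathGraph (n + 1) where
  toFun := Fin.castSucc
  map_rel' h := by simpa only [pathGraph_adj, Fin.val_castSucc] using h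

/-- The reversal of a path. -/
def pathGraphRev (n : ℕ) : pathGraph n →g pathGraph n where
  toFun := Fin.rev
  map_rel' h := by
    simp only [pathGraph_adj, Fin.val_rev] at h ⊢
    omega

lemma pathGraph_adj_castSucc_last (n : ℕ) :
    (pathGraph (n + 2)).Adj (Fin.last n).castSucc (Fin.last (n + 1)) := by
  simp [pathGraph_adj]

lemma lastWeight_succ (D : Fin (n + 1) → ℕ) :
    lastWeight D = lastWeight (D ∘ Fin.castSucc) + D (Fin.last n) * 2 ^ n := by
  simp [lastWeight, Fin.sum_univ_castSucc]

lemma lastWeight_add (D E : Fin n → ℕ) : lastWeight (D + E) = lastWeight D + lastWeight E := by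
  simp only [lastWeight, Pi.add_apply, add_mul, Finset.sum_add_distrib]

lemma lastWeight_unitDist (t : ℕ) (x : Fin n) : lastWeight (unitDist t x) = t * 2 ^ (x : ℕ) :=
  sum_unitDist_mul t x fun x => 2 ^ (x : ℕ)

lemma lastWeight_comp_rev (D : Fin (n + 1) → ℕ) :
    lastWeight (D ∘ Fin.rev) = ∑ x, D x * 2 ^ (n - x : ℕ) := by
  rw [lastWeight, ← Equiv.sum_comp Fin.revPerm]
  simp [Fin.val_rev]

lemma unitDist_comp_rev (t : ℕ) (x : Fin n) : unitDist t x ∘ Fin.rev = unitDist t x.rev := by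
  ext y
  simp [unitDist, Fin.rev_eq_iff]

lemma reaches_last_of_le_lastWeight {N : ℕ} {D : Fin (n + 1) → ℕ} (h : N * 2 ^ n ≤ lastWeight D) :
    Reaches (pathGraph (n + 1)) D (unitDist N (Fin.last n)) := by
  induction n generalizing N with
  | zero => exact .of_le (unitDist_le_iff.2 (by simpa [lastWeight] using h))
  | succ n ih =>
    set c := D (Fin.last (n + 1)) with hc
    set q := lastWeight (D ∘ Fin.castSucc) / 2 ^ (n + 1) with hq
    have hNq : N ≤ q + c := by
      rw [lastWeight_succ] at h
      rw [hq, ← Nat.add_mul_div_right _ _ (by positivity)]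
      exact (Nat.le_div_iff_mul_le (by positivity)).2 h
    have hq2 : 2 * q * 2 ^ n ≤ lastWeight (D ∘ Fin.castSucc) :=
      calc 2 * q * 2 ^ n = q * 2 ^ (n + 1) := by ring
        _ ≤ _ := Nat.div_mul_le_self _ _
    have hpush := (ih hq2).pushforward (pathGraphCastSucc (n + 1))
    rw [pushforwardDist_unitDist] at hpush
    have hlast := hpush.trans (reaches_unitDist_of_adj (pathGraph_adj_castSucc_last n) q)
    have hadd := hlast.add_right (unitDist c (Fin.last (n + 1)))
    rw [← unitDist_add] at hadd
    rw [← pushforwardDist_castSucc_add_unitDist_last D]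
    exact hadd.trans (.of_le (unitDist_le_iff.2 (by simpa [unitDist] using hNq)))

theorem reaches_last_iff {N : ℕ} {D : Fin (n + 1) → ℕ} :
    Reaches (pathGraph (n + 1)) D (unitDist N (Fin.last n)) ↔ N * 2 ^ n ≤ lastWeight D := by
  refine ⟨fun h => ?_, reaches_last_of_le_lastWeight⟩
  have hdouble : ∀ u v, (pathGraph (n + 1)).Adj u v → 2 ^ (v : ℕ) ≤ 2 * 2 ^ (u : ℕ) := by
    intro u v huv
    rw [pathGraph_adj] at huv
    rw [← pow_succ']
    exact Nat.pow_le_pow_right two_pos (by omega)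
  simpa only [sum_unitDist_mul, Fin.val_last, lastWeight] using h.sum_mul_le hdouble

lemma Reaches.comp_rev {D T : Fin n → ℕ} (h : Reaches (pathGraph n) D T) :
    Reaches (pathGraph n) (D ∘ Fin.rev) (T ∘ Fin.rev) := by
  have pushforward_rev (E : Fin n → ℕ) : pushforwardDist (pathGraphRev n) E = E ∘ Fin.rev := by
    calc pushforwardDist Fin.rev E
        = pushforwardDist Fin.revPerm ((E ∘ Fin.rev) ∘ Fin.revPerm) := by
          congr 1; ext x; simp
      _ = E ∘ Fin.rev := pushforwardDist_comp_equiv _ _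
  simpa only [pushforward_rev] using h.pushforward (pathGraphRev n)

theorem reaches_zero_iff {N : ℕ} {D : Fin (n + 1) → ℕ} :
    Reaches (pathGraph (n + 1)) D (unitDist N 0) ↔ N * 2 ^ n ≤ lastWeight (D ∘ Fin.rev) := by
  rw [← reaches_last_iff, ← Fin.rev_zero, ← unitDist_comp_rev]
  refine ⟨Reaches.comp_rev, fun h => ?_⟩
  simpa [Function.comp_assoc, Fin.rev_involutive.comp_self] using h.comp_rev

end PathCriterion

section PathValue

open SimpleGraph

/-- The target-selectable pebbling number of `N` pebbles at either end of the path with `n + 1`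
vertices: `N * 2 ^ k` if `n = 2 * k`, and `(N * 2 ^ (k + 2) + 1) / 3` (rounded down) if
`n = 2 * k + 1`. -/
def endsThreshold (N n : ℕ) : ℕ := (2 * (N * 2 ^ (n - n / 2)) + n % 2) / (2 + n % 2)

lemma endsThreshold_add_two_mul (N n i : ℕ) :
    endsThreshold N (n + 2 * i) = endsThreshold (2 ^ i * N) n := by
  have hexp : n + 2 * i - (n / 2 + i) = i + (n - n / 2) := by omega
  rw [endsThreshold, endsThreshold, Nat.add_mul_mod_self_left, Nat.add_mul_div_left _ _ two_pos,
    hexp, pow_add]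
  congr 3
  ring

lemma lt_endsThreshold_iff {N n t : ℕ} :
    t < endsThreshold N n ↔ (2 + n % 2) * t + 2 ≤ 2 * (N * 2 ^ (n - n / 2)) := by
  rw [endsThreshold, Nat.lt_iff_add_one_le, Nat.le_div_iff_mul_le (by omega), add_one_mul,
    mul_comm t]
  omega

lemma two_pow_mod_two (n : ℕ) : 2 ^ (n % 2) = 1 + n % 2 := by
  rcases Nat.mod_two_eq_zero_or_one n with h | h <;> simp [h]

lemma two_pow_eq_mul_two_pow_half (n : ℕ) : 2 ^ n = 2 ^ (n - n / 2) * 2 ^ (n / 2) := by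
  rw [← pow_add, Nat.sub_add_cancel (Nat.div_le_self _ _)]

lemma two_add_mod_two_le_div_add_div {n x y : ℕ} (hxy : x + y = n) :
    2 + n % 2 ≤ 2 ^ x / 2 ^ (n / 2) + 2 ^ y / 2 ^ (n / 2) := by
  wlog hle : x ≤ y generalizing x y
  · rw [add_comm (2 ^ x / _)]
    exact this (by omega) (by omega)
  rw [Nat.pow_div (by omega : n / 2 ≤ y) two_pos]
  rcases (by omega : x ≤ n / 2).lt_or_eq with hlt | rfl
  · refine le_trans ?_ (Nat.le_add_left _ _)
    have : y - n / 2 < 2 ^ (y - n / 2) := Nat.lt_two_pow_self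
    omega
  · have hy : y - n / 2 = n % 2 := by omega
    rw [Nat.div_self (by positivity), hy, two_pow_mod_two]
    omega

lemma sum_mul_div_lt {ι : Type*} [Fintype ι] {a w : ι → ℕ} {d W : ℕ}
    (h : ∑ x, a x * w x < W * d) : ∑ x, a x * (w x / d) < W := by
  refine lt_of_mul_lt_mul_right (lt_of_le_of_lt ?_ h) (Nat.zero_le d)
  rw [Finset.sum_mul]
  refine Finset.sum_le_sum fun x _ => ?_
  rw [mul_assoc]
  exact Nat.mul_le_mul_left _ (Nat.div_mul_le_self _ _)

variable {N n : ℕ}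

/-- Dividing both weights of a pebble by `2 ^ (n / 2)`, rounding down, gives at least `2 + n % 2` in
total, whereas each divided total weight is an integer below `N * 2 ^ (n - n / 2)`. -/
lemma pebTotal_lt_endsThreshold {D : Fin (n + 1) → ℕ} (hlast : lastWeight D < N * 2 ^ n)
    (hfirst : lastWeight (D ∘ Fin.rev) < N * 2 ^ n) : pebTotal D < endsThreshold N n := by
  rw [two_pow_eq_mul_two_pow_half, ← mul_assoc] at hlast hfirst
  rw [lastWeight_comp_rev] at hfirst
  have hlast' := sum_mul_div_lt hlast
  have hfirst' := sum_mul_div_lt hfirst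
  have hsum : (2 + n % 2) * pebTotal D ≤
      ∑ x, D x * (2 ^ (x : ℕ) / 2 ^ (n / 2)) + ∑ x, D x * (2 ^ (n - x : ℕ) / 2 ^ (n / 2)) := by
    rw [pebTotal, Finset.mul_sum, ← Finset.sum_add_distrib]
    refine Finset.sum_le_sum fun x _ => ?_
    rw [← mul_add, mul_comm]
    exact Nat.mul_le_mul_left _ (two_add_mod_two_le_div_add_div (by omega))
  rw [lt_endsThreshold_iff]
  omega

/-- Halve the pebbles between the two central vertices, which coincide if `n` is even. -/
lemma exists_pebTotal_eq_of_lt_endsThreshold {t : ℕ} (ht : t < endsThreshold N n) :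
    ∃ D : Fin (n + 1) → ℕ, pebTotal D = t ∧ lastWeight D < N * 2 ^ n ∧
      lastWeight (D ∘ Fin.rev) < N * 2 ^ n := by
  rw [lt_endsThreshold_iff] at ht
  let x : Fin (n + 1) := ⟨n / 2, by omega⟩
  have hx : 2 ^ (x : ℕ) = 2 ^ (n / 2) := rfl
  have hxrev : 2 ^ (x.rev : ℕ) = (1 + n % 2) * 2 ^ (n / 2) := by
    rw [← two_pow_mod_two, ← pow_add]
    congr 1
    simp only [x, Fin.val_rev]
    omega
  have hweight {a b : ℕ} (hab : a + (1 + n % 2) * b < N * 2 ^ (n - n / 2)) :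
      a * 2 ^ (n / 2) + b * ((1 + n % 2) * 2 ^ (n / 2)) < N * 2 ^ n :=
    calc a * 2 ^ (n / 2) + b * ((1 + n % 2) * 2 ^ (n / 2))
        = (a + (1 + n % 2) * b) * 2 ^ (n / 2) := by ring
      _ < N * 2 ^ (n - n / 2) * 2 ^ (n / 2) := by gcongr
      _ = N * 2 ^ n := by rw [mul_assoc, ← two_pow_eq_mul_two_pow_half]
  have hparity := Nat.mod_two_eq_zero_or_one n
  refine ⟨unitDist ((t + 1) / 2) x + unitDist (t / 2) x.rev, ?_, ?_, ?_⟩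
  · simp only [pebTotal, unitDist_eq_single, Pi.add_apply, Finset.sum_add_distrib,
      Fintype.sum_pi_single']
    omega
  · rw [lastWeight_add, lastWeight_unitDist, lastWeight_unitDist, hx, hxrev]
    apply hweight
    rcases hparity with h | h <;> rw [h] at ht ⊢ <;> omega
  · rw [Pi.add_comp, unitDist_comp_rev, unitDist_comp_rev, Fin.rev_rev, add_comm (unitDist _ _),
      lastWeight_add, lastWeight_unitDist, lastWeight_unitDist, hx, hxrev]
    apply hweight
    rcases hparity with h | h <;> rw [h] at ht ⊢ <;> omega

theorem tsPeb_pathGraph_ends (N n : ℕ) :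
    tsPeb (pathGraph (n + 1)) {unitDist N 0, unitDist N (Fin.last n)} = endsThreshold N n := by
  refine tsPeb_eq_natCast (fun D hD => ?_) (fun t ht => ?_)
  · simp only [Set.mem_insert_iff, Set.mem_singleton_iff, exists_eq_or_imp, exists_eq_left,
      reaches_zero_iff, reaches_last_iff]
    by_contra! hweights
    exact hD.not_gt (pebTotal_lt_endsThreshold hweights.2 hweights.1)
  · obtain ⟨D, hDt, hlast, hfirst⟩ := exists_pebTotal_eq_of_lt_endsThreshold ht
    refine ⟨D, hDt, ?_⟩
    simp only [Set.mem_insert_iff, Set.mem_singleton_iff, forall_eq_or_imp, forall_eq,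
      reaches_zero_iff, reaches_last_iff, not_le]
    exact ⟨hfirst, hlast⟩

end PathValue

section Cycle

open SimpleGraph

variable {m : ℕ}

open Fin.CommRing Fin.NatCast in
/-- The path with `m + 3` vertices wound once around the cycle on `m + 2` vertices, with both ends
at `v`. -/
def pathGraphToCycleGraph (v : Fin (m + 2)) : pathGraph (m + 3) →g cycleGraph (m + 2) where
  toFun x := v + ((x : ℕ) : Fin (m + 2))
  map_rel' {x y} h := by
    rw [pathGraph_adj] at h
    rw [cycleGraph_adj, add_sub_add_left_eq_sub, add_sub_add_left_eq_sub]
    rcases h with h | h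
    · exact .inr (by rw [← h, Nat.cast_succ, add_sub_cancel_left])
    · exact .inl (by rw [← h, Nat.cast_succ, add_sub_cancel_left])

lemma pathGraphToCycleGraph_zero (v : Fin (m + 2)) : pathGraphToCycleGraph v 0 = v := by
  simp [pathGraphToCycleGraph]

lemma pathGraphToCycleGraph_last (v : Fin (m + 2)) :
    pathGraphToCycleGraph v (Fin.last (m + 2)) = v := by
  simp [pathGraphToCycleGraph]

lemma pathGraphToCycleGraph_castSucc (v x : Fin (m + 2)) :
    pathGraphToCycleGraph v x.castSucc = v + x := by
  simp [pathGraphToCycleGraph]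

open Fin.CommRing in
lemma cycleGraph_adj_zero {u : Fin (m + 2)} (h : (cycleGraph (m + 2)).Adj u 0) :
    u = 1 ∨ u = Fin.last (m + 1) := by
  have neg_one_eq_last : (-1 : Fin (m + 2)) = Fin.last (m + 1) := Fin.ext Fin.coe_neg_one
  rwa [cycleGraph_adj, sub_zero, zero_sub, neg_eq_iff_eq_neg, neg_one_eq_last] at h

open Fin.CommRing in
/-- The cycle without the edges at the vertex `0`, as a subgraph of the path. -/
def cutCycleGraph (m : ℕ) :
    (cycleGraph (m + 2)).deleteIncidenceSet 0 →g pathGraph (m + 3) where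
  toFun := Fin.castSucc
  map_rel' {x y} h := by
    have val_add_one {a b : Fin (m + 2)} (ha : a ≠ 0) (hab : a - b = 1) : (b : ℕ) + 1 = a := by
      rw [sub_eq_iff_eq_add'] at hab
      have hb : b ≠ Fin.last (m + 1) := fun hb => ha (by simp [hab, hb])
      rw [hab, Fin.val_add_one, if_neg hb]
    rw [deleteIncidenceSet_adj, cycleGraph_adj] at h
    rw [pathGraph_adj]
    obtain ⟨h | h, hx, hy⟩ := h
    · exact .inr (val_add_one hx h)
    · exact .inl (val_add_one hy h)

lemma reaches_cycleGraph_of_reaches_ends {D : Fin (m + 2) → ℕ} {v : Fin (m + 2)}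
    {T : Fin (m + 3) → ℕ} (hT : T = unitDist 1 0 ∨ T = unitDist 1 (Fin.last (m + 2)))
    (h : Reaches (pathGraph (m + 3)) (Fin.snoc (D ∘ Equiv.addLeft v) 0) T) :
    Reaches (cycleGraph (m + 2)) D (unitDist 1 v) := by
  have hfold :
      pushforwardDist (pathGraphToCycleGraph v) (Fin.snoc (D ∘ Equiv.addLeft v) 0) = D := by
    conv_rhs => rw [← pushforwardDist_comp_equiv (Equiv.addLeft v) D]
    rw [pushforwardDist, Fin.sum_univ_castSucc]
    simp [pathGraphToCycleGraph_castSucc, pushforwardDist, unitDist_eq_single]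
  obtain rfl | rfl := hT <;>
    simpa only [hfold, pushforwardDist_unitDist, pathGraphToCycleGraph_zero,
      pathGraphToCycleGraph_last] using h.pushforward (pathGraphToCycleGraph v)

lemma reaches_ends_of_reaches_cycleGraph {D : Fin (m + 3) → ℕ} (hzero : D 0 = 0)
    (hlast : D (Fin.last (m + 2)) = 0)
    (h : Reaches (cycleGraph (m + 2)) (D ∘ Fin.castSucc) (unitDist 1 0)) :
    Reaches (pathGraph (m + 3)) D (unitDist 1 0) ∨
      Reaches (pathGraph (m + 3)) D (unitDist 1 (Fin.last (m + 2))) := by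
  obtain ⟨u, hu, htwo⟩ := h.exists_adj_reaches_deleteIncidenceSet hzero
  have hpath : Reaches (pathGraph (m + 3)) D (unitDist 2 u.castSucc) := by
    have hD := pushforwardDist_castSucc_add_unitDist_last D
    rw [hlast, unitDist_eq_single, Pi.single_zero, add_zero] at hD
    simpa only [cutCycleGraph, RelHom.coeFn_mk, hD, pushforwardDist_unitDist]
      using htwo.pushforward (cutCycleGraph m)
  obtain rfl | rfl := cycleGraph_adj_zero hu
  · refine .inl (hpath.trans (reaches_unitDist_of_adj ?_ 1))
    simp [pathGraph_adj]
  · exact .inr (hpath.trans (reaches_unitDist_of_adj (pathGraph_adj_castSucc_last _) 1))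

/-- Cutting the cycle open at the target vertex duplicates that vertex. -/
theorem pebSet_cycleGraph (m : ℕ) :
    pebSet (cycleGraph (m + 2)) {D | ∃ v, D = unitDist 1 v} =
      tsPeb (pathGraph (m + 3)) {unitDist 1 0, unitDist 1 (Fin.last (m + 2))} := by
  refine congrArg sInf (Set.ext fun N => ⟨fun hN D hND => ?_, fun hN D hND => ?_⟩)
  · simp only [Set.mem_insert_iff, Set.mem_singleton_iff, exists_eq_or_imp, exists_eq_left]
    by_cases hzero : D 0 = 0
    · by_cases hlast : D (Fin.last (m + 2)) = 0
      · refine reaches_ends_of_reaches_cycleGraph hzero hlast (hN _ ?_ _ ⟨0, rfl⟩)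
        rwa [pebTotal, Fin.sum_univ_castSucc, hlast, add_zero] at hND
      · exact .inr (.of_le (unitDist_le_iff.2 (Nat.one_le_iff_ne_zero.2 hlast)))
    · exact .inl (.of_le (unitDist_le_iff.2 (Nat.one_le_iff_ne_zero.2 hzero)))
  · rintro _ ⟨v, rfl⟩
    have htotal : pebTotal (Fin.snoc (D ∘ Equiv.addLeft v) 0 : Fin (m + 3) → ℕ) = pebTotal D := by
      simp only [pebTotal, Fin.sum_univ_castSucc, Fin.snoc_castSucc, Fin.snoc_last, add_zero,
        Function.comp_apply, Equiv.sum_comp (Equiv.addLeft v) D]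
    obtain ⟨T, hT, hreach⟩ := hN _ (htotal ▸ hND)
    exact reaches_cycleGraph_of_reaches_ends hT hreach

end Cycle

open SimpleGraph in
/-- `ρ(Pₙ, {2^i·δ_{x₁}, 2^i·δ_{xₙ}}) = π(C_{n+2i-1})`. -/
theorem ts_path_power_targets_eq_cycle (n i : ℕ) (hn : 2 ≤ n)
    (hni : 3 ≤ n + 2 * i - 1) :
    tsPeb (pathGraph n)
        {unitDist (2 ^ i) (⟨0, by omega⟩ : Fin n),
         unitDist (2 ^ i) (⟨n - 1, by omega⟩ : Fin n)}
      = pebSet (cycleGraph (n + 2 * i - 1))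
          {D | ∃ v : Fin (n + 2 * i - 1), D = unitDist 1 v} := by
  obtain ⟨n, rfl⟩ : ∃ k, n = k + 1 := ⟨n - 1, by omega⟩
  obtain ⟨m, hm⟩ : ∃ m, n + 1 + 2 * i - 1 = m + 2 := ⟨n + 1 + 2 * i - 3, by omega⟩
  rw [hm, pebSet_cycleGraph, tsPeb_pathGraph_ends 1, show m + 2 = n + 2 * i by omega,
    endsThreshold_add_two_mul, mul_one]
  exact tsPeb_pathGraph_ends (2 ^ i) n
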